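/- arXiv:2211.09196 — 2 statements merged into one kernel-verified Lean document; each statement's English description precedes it below -/
import Mathlib

section
/- Let τ, α, ν > 0 and let d ≥ 2, m ≥ 0 be integers. Then the series Σ_{j=0}^∞ b_{m+2j}(τ,α,ν) · (m+2j)! / (j! · 2^{2j} · (m+(d+1)/2)_j) converges, and (√π / (2^{m+d−2} Γ(d/2))) · (Γ(m+d−1) / (m! Γ(m+(d−1)/2))) · Σ_{j=0}^∞ b_{m+2j}(τ,α,ν) (m+2j)! / (j! 2^{2j} (m+(d+1)/2)_j) = C_{m,d}(τ,α,ν) · S_{m,d}(τ,α,ν). -/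
/-!
The duplication formula `(x)_{m+2j} = (x)_m · 4^j · ((x+m)/2)_j · ((x+m+1)/2)_j`, applied to each of
`x = τ, α, α+ν+τ`, turns the `j`-th term of the series into `b_m · m!` times the `j`-th term of the
`₄F₃(1)` series (`term_eq`): two factors `4^j` come from the numerator, one from the denominator,
and the factor `2^{2j}` of the series removes the remaining one. So the two sides agree term by
term.

For convergence, Euler's product `n^x n! / (x)_{n+1} → Γ(x)` shows that the `(n+1)`-st term of the
`₄F₃(1)` series is a convergent factor times `n^{-(ν+d/2)} / (n+1)`, where `ν + d/2` is the sum of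
the lower parameters minus the sum of the upper ones. Comparison with a `p`-series finishes.
-/

open scoped Real BigOperators

/-- The rising factorial (Pochhammer symbol) `(x)_j = x(x+1)⋯(x+j-1)`. -/
noncomputable def poch (x : ℝ) (j : ℕ) : ℝ := ∏ i ∈ Finset.range j, (x + i)

/-- The Beta function `B(x,y) = Γ(x)Γ(y)/Γ(x+y)`. -/
noncomputable def betaFn (x y : ℝ) : ℝ := Real.Gamma x * Real.Gamma y / Real.Gamma (x + y)

/-- The Schoenberg sequence of the 𝓕-family. -/
noncomputable def schoenbergF (τ α ν : ℝ) (m : ℕ) : ℝ :=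
  betaFn α (ν + τ) / betaFn α ν *
    (poch τ m * poch α m / (poch (α + ν + τ) m * (Nat.factorial m : ℝ)))

/-- The constant `C_{m,d}(τ,α,ν)`. -/
noncomputable def Cmd (τ α ν : ℝ) (d m : ℕ) : ℝ :=
  schoenbergF τ α ν m * Real.sqrt π * Real.Gamma ((m : ℝ) + d - 1) /
    ((2 : ℝ) ^ ((m : ℝ) + d - 2) * Real.Gamma ((d : ℝ) / 2) *
      Real.Gamma ((m : ℝ) + ((d : ℝ) - 1) / 2))

/-- The `₄F₃(1)` series `S_{m,d}(τ,α,ν)`. -/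
noncomputable def Smd (τ α ν : ℝ) (d m : ℕ) : ℝ :=
  ∑' j : ℕ,
    poch ((α + m) / 2) j * poch ((α + m + 1) / 2) j * poch ((τ + m) / 2) j *
        poch ((τ + m + 1) / 2) j /
      (poch ((α + ν + τ + m) / 2) j * poch ((α + ν + τ + m + 1) / 2) j *
        poch ((m : ℝ) + ((d : ℝ) + 1) / 2) j * (Nat.factorial j : ℝ))

open Filter Topology

lemma poch_pos {x : ℝ} (hx : 0 < x) (j : ℕ) : 0 < poch x j :=
  Finset.prod_pos fun i _ => by positivity

lemma poch_succ (x : ℝ) (j : ℕ) : poch x (j + 1) = poch x j * (x + j) :=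
  Finset.prod_range_succ _ _

/-- Duplication formula for the rising factorial. -/
lemma poch_add_two_mul (x : ℝ) (m j : ℕ) :
    poch x (m + 2 * j) =
      poch x m * 4 ^ j * (poch ((x + m) / 2) j * poch ((x + m + 1) / 2) j) := by
  induction j with
  | zero => simp [poch]
  | succ j ih =>
    rw [show m + 2 * (j + 1) = m + 2 * j + 1 + 1 by ring, poch_succ, poch_succ, ih, poch_succ,
      poch_succ]
    push_cast
    ring

/-- The rising factorial in terms of Euler's approximation `GammaSeq x n` to `Γ(x)`. -/
lemma poch_succ_eq_GammaSeq {x : ℝ} (hx : 0 < x) {n : ℕ} (hn : 0 < n) :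
    poch x (n + 1) = (n : ℝ) ^ x * (n.factorial : ℝ) / Real.GammaSeq x n := by
  have hp := poch_pos hx (n + 1)
  have hn' : (0 : ℝ) < n := by exact_mod_cast hn
  have h1 : (0 : ℝ) < (n : ℝ) ^ x := Real.rpow_pos_of_pos hn' x
  have h2 : (0 : ℝ) < (n.factorial : ℝ) := by positivity
  have h : Real.GammaSeq x n = (n : ℝ) ^ x * (n.factorial : ℝ) / poch x (n + 1) := rfl
  rw [h]
  field_simp

/-- A `₄F₃(1)` series with positive parameters converges when the sum of the lower parameters
exceeds the sum of the upper ones. -/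
lemma summable_four_three {a₁ a₂ a₃ a₄ b₁ b₂ b₃ : ℝ} (ha₁ : 0 < a₁) (ha₂ : 0 < a₂) (ha₃ : 0 < a₃)
    (ha₄ : 0 < a₄) (hb₁ : 0 < b₁) (hb₂ : 0 < b₂) (hb₃ : 0 < b₃)
    (h : a₁ + a₂ + a₃ + a₄ < b₁ + b₂ + b₃) :
    Summable fun j : ℕ => poch a₁ j * poch a₂ j * poch a₃ j * poch a₄ j /
      (poch b₁ j * poch b₂ j * poch b₃ j * (Nat.factorial j : ℝ)) := by
  rw [← summable_nat_add_iff 1]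
  set e : ℝ := a₁ + a₂ + a₃ + a₄ - (b₁ + b₂ + b₃) with he
  let R : ℕ → ℝ := fun n =>
    Real.GammaSeq b₁ n * Real.GammaSeq b₂ n * Real.GammaSeq b₃ n /
      (Real.GammaSeq a₁ n * Real.GammaSeq a₂ n * Real.GammaSeq a₃ n * Real.GammaSeq a₄ n)
  have hR : Tendsto R atTop (𝓝 (Real.Gamma b₁ * Real.Gamma b₂ * Real.Gamma b₃ /
      (Real.Gamma a₁ * Real.Gamma a₂ * Real.Gamma a₃ * Real.Gamma a₄))) := by
    have g := Real.GammaSeq_tendsto_Gamma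
    refine (((g b₁).mul (g b₂)).mul (g b₃)).div ((((g a₁).mul (g a₂)).mul (g a₃)).mul (g a₄)) ?_
    have := Real.Gamma_pos_of_pos ha₁
    have := Real.Gamma_pos_of_pos ha₂
    have := Real.Gamma_pos_of_pos ha₃
    have := Real.Gamma_pos_of_pos ha₄
    positivity
  have hO : (fun n : ℕ => (n : ℝ) ^ e / (n + 1)) =O[atTop] fun n : ℕ => (n : ℝ) ^ (e - 1) := by
    refine Asymptotics.IsBigO.of_bound 1 ?_
    filter_upwards [eventually_gt_atTop 0] with n hn
    have hn' : (0 : ℝ) < n := by exact_mod_cast hn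
    have hpos : (0 : ℝ) < (n : ℝ) ^ e := Real.rpow_pos_of_pos hn' e
    rw [Real.rpow_sub_one hn'.ne', one_mul, Real.norm_of_nonneg (by positivity),
      Real.norm_of_nonneg (by positivity)]
    gcongr
    linarith
  have hmain := (hR.isBigO_one ℝ).mul hO
  simp only [one_mul] at hmain
  refine summable_of_isBigO_nat (Real.summable_nat_rpow.2 (by linarith : e - 1 < -1))
    (Asymptotics.IsBigO.congr' hmain ?_ EventuallyEq.rfl)
  filter_upwards [eventually_gt_atTop 0] with n hn
  have hn' : (0 : ℝ) < n := by exact_mod_cast hn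
  have hp : ∀ x : ℝ, (0 : ℝ) < (n : ℝ) ^ x := Real.rpow_pos_of_pos hn'
  have hG : ∀ {x : ℝ}, 0 < x → 0 < Real.GammaSeq x n := fun {x} hx =>
    div_pos (mul_pos (hp x) (by positivity)) (poch_pos hx (n + 1))
  have hee : (n : ℝ) ^ e = (n : ℝ) ^ a₁ * (n : ℝ) ^ a₂ * (n : ℝ) ^ a₃ * (n : ℝ) ^ a₄ /
      ((n : ℝ) ^ b₁ * (n : ℝ) ^ b₂ * (n : ℝ) ^ b₃) := by
    simp only [he, Real.rpow_sub hn', Real.rpow_add hn']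
  rw [hee, poch_succ_eq_GammaSeq ha₁ hn, poch_succ_eq_GammaSeq ha₂ hn,
    poch_succ_eq_GammaSeq ha₃ hn, poch_succ_eq_GammaSeq ha₄ hn, poch_succ_eq_GammaSeq hb₁ hn,
    poch_succ_eq_GammaSeq hb₂ hn, poch_succ_eq_GammaSeq hb₃ hn, Nat.factorial_succ]
  push_cast
  have hf : (n.factorial : ℝ) ≠ 0 := by positivity
  have := (hG ha₁).ne'
  have := (hG ha₂).ne'
  have := (hG ha₃).ne'
  have := (hG ha₄).ne'
  have := (hG hb₁).ne'
  have := (hG hb₂).ne'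
  have := (hG hb₃).ne'
  have := (hp b₁).ne'
  have := (hp b₂).ne'
  have := (hp b₃).ne'
  simp only [R]
  -- The powers `n ^ aᵢ`, `n ^ bᵢ` are treated as atoms, since their exponents are not to be merged.
  generalize (n : ℝ) ^ a₁ = A₁, (n : ℝ) ^ a₂ = A₂, (n : ℝ) ^ a₃ = A₃, (n : ℝ) ^ a₄ = A₄,
    (n : ℝ) ^ b₁ = B₁, (n : ℝ) ^ b₂ = B₂, (n : ℝ) ^ b₃ = B₃ at *
  field_simp

/-- The terms of the two series are proportional, with ratio `b_m · m!`. -/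
lemma term_eq {τ α ν : ℝ} (hτ : 0 < τ) (hα : 0 < α) (hν : 0 < ν) (d m j : ℕ) :
    schoenbergF τ α ν (m + 2 * j) * (Nat.factorial (m + 2 * j) : ℝ) /
        ((Nat.factorial j : ℝ) * (2 : ℝ) ^ (2 * j) * poch ((m : ℝ) + ((d : ℝ) + 1) / 2) j) =
      schoenbergF τ α ν m * (Nat.factorial m : ℝ) *
        (poch ((α + m) / 2) j * poch ((α + m + 1) / 2) j * poch ((τ + m) / 2) j *
          poch ((τ + m + 1) / 2) j /
        (poch ((α + ν + τ + m) / 2) j * poch ((α + ν + τ + m + 1) / 2) j *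
          poch ((m : ℝ) + ((d : ℝ) + 1) / 2) j * (Nat.factorial j : ℝ))) := by
  have h1 := (poch_pos (x := α + ν + τ) (by positivity) m).ne'
  have h2 := (poch_pos (x := (α + ν + τ + m) / 2) (by positivity) j).ne'
  have h3 := (poch_pos (x := (α + ν + τ + m + 1) / 2) (by positivity) j).ne'
  have h4 := (poch_pos (x := (m : ℝ) + ((d : ℝ) + 1) / 2) (by positivity) j).ne'
  have h5 : (Nat.factorial m : ℝ) ≠ 0 := by positivity
  have h6 : (Nat.factorial (m + 2 * j) : ℝ) ≠ 0 := by positivity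
  have h7 : (Nat.factorial j : ℝ) ≠ 0 := by positivity
  unfold schoenbergF
  rw [poch_add_two_mul τ, poch_add_two_mul α, poch_add_two_mul (α + ν + τ), pow_mul,
    show (2 : ℝ) ^ 2 = 4 by norm_num]
  generalize betaFn α (ν + τ) / betaFn α ν = K
  field_simp

theorem stmt1 (τ α ν : ℝ) (hτ : 0 < τ) (hα : 0 < α) (hν : 0 < ν)
    (d : ℕ) (hd : 2 ≤ d) (m : ℕ) :
    Summable (fun j : ℕ =>
      schoenbergF τ α ν (m + 2 * j) * (Nat.factorial (m + 2 * j) : ℝ) /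
        ((Nat.factorial j : ℝ) * (2 : ℝ) ^ (2 * j) * poch ((m : ℝ) + ((d : ℝ) + 1) / 2) j)) ∧
    Real.sqrt π / ((2 : ℝ) ^ ((m : ℝ) + d - 2) * Real.Gamma ((d : ℝ) / 2)) *
        (Real.Gamma ((m : ℝ) + d - 1) /
          ((Nat.factorial m : ℝ) * Real.Gamma ((m : ℝ) + ((d : ℝ) - 1) / 2))) *
        (∑' j : ℕ,
          schoenbergF τ α ν (m + 2 * j) * (Nat.factorial (m + 2 * j) : ℝ) /
            ((Nat.factorial j : ℝ) * (2 : ℝ) ^ (2 * j) *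
              poch ((m : ℝ) + ((d : ℝ) + 1) / 2) j)) =
      Cmd τ α ν d m * Smd τ α ν d m := by
  simp only [term_eq hτ hα hν d m]
  refine ⟨Summable.mul_left _ (summable_four_three ?_ ?_ ?_ ?_ ?_ ?_ ?_ ?_), ?_⟩
  iterate 7 positivity
  · have : (0 : ℝ) ≤ d := by positivity
    linarith
  · rw [tsum_mul_left]
    have h5 : (Nat.factorial m : ℝ) ≠ 0 := by positivity
    unfold Cmd Smd
    generalize (∑' j : ℕ, _ : ℝ) = S
    -- Cancelling `m!` is all that remains; the other denominators are kept as inverses.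
    simp only [div_eq_mul_inv, mul_inv]
    have h8 : (Nat.factorial m : ℝ) * (Nat.factorial m : ℝ)⁻¹ = 1 := mul_inv_cancel₀ h5
    generalize (Nat.factorial m : ℝ)⁻¹ = f at *
    linear_combination (√π * ((2 : ℝ) ^ ((m : ℝ) + d - 2))⁻¹ * (Real.Gamma ((d : ℝ) * 2⁻¹))⁻¹ *
      Real.Gamma ((m : ℝ) + d - 1) * (Real.Gamma ((m : ℝ) + ((d : ℝ) - 1) * 2⁻¹))⁻¹ *
      schoenbergF τ α ν m * S) * h8
end

section
/- Let τ, α, ν > 0 and let d ≥ 2 be an integer. Then C_{m,d}(τ,α,ν) ~ (Γ(ν+α)Γ(ν+τ)/(Γ(α)Γ(ν)Γ(τ))) · (√π/(Γ(d/2) · 2^{m+d−2})) · m^{(d−1)/2}/m^{1+ν} as m → ∞. -/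
/-!
Everything follows from the asymptotics `Γ(m + s) ~ m ^ s · m! / m` for fixed `s > 0`, which is
Euler's limit formula for `Γ` (`Real.GammaSeq_tendsto_Gamma`) combined with
`Γ(m + s) = (s)_m Γ(s)`. Let `R s m = Γ(m + s) / (m ^ s · m! / m)`, so that `R s m → 1`. Writing
each Pochhammer symbol and each Gamma value depending on `m` through `R`, the powers of `m`, the
factorials and all the constants cancel exactly, so for `m ≥ 1` the quotient in question equals
`R τ m · R α m · R (d-1) m / (R (α+ν+τ) m · R ((d-1)/2) m)`, which tends to `1`.
-/

open scoped Real BigOperators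
open Filter

/-- The ratio of `Γ(m + s)` to its leading-order asymptotics `m ^ s · m! / m`. -/
noncomputable def gammaRatio (s : ℝ) (m : ℕ) : ℝ :=
  Real.Gamma ((m : ℝ) + s) / ((m : ℝ) ^ s * ((m.factorial : ℝ) / m))

lemma gamma_eq_poch {s : ℝ} (hs : 0 < s) (m : ℕ) :
    Real.Gamma ((m : ℝ) + s) = poch s m * Real.Gamma s := by
  induction m with
  | zero => simp [poch]
  | succ k ih =>
    have h : ((k + 1 : ℕ) : ℝ) + s = ((k : ℝ) + s) + 1 := by push_cast; ring
    rw [h, Real.Gamma_add_one (by positivity), ih]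
    simp only [poch, Finset.prod_range_succ]
    ring

lemma gamma_eq_gammaRatio (s : ℝ) {m : ℕ} (hm : 0 < m) :
    Real.Gamma ((m : ℝ) + s) = gammaRatio s m * ((m : ℝ) ^ s * ((m.factorial : ℝ) / m)) := by
  have h : (m : ℝ) ^ s * ((m.factorial : ℝ) / m) ≠ 0 := by positivity
  rw [gammaRatio, div_mul_cancel₀ _ h]

lemma poch_eq_gammaRatio {s : ℝ} (hs : 0 < s) {m : ℕ} (hm : 0 < m) :
    poch s m = gammaRatio s m * ((m : ℝ) ^ s * ((m.factorial : ℝ) / m)) / Real.Gamma s := by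
  rw [← gamma_eq_gammaRatio s hm, gamma_eq_poch hs,
    mul_div_cancel_right₀ _ (Real.Gamma_pos_of_pos hs).ne']

lemma gammaRatio_pos {s : ℝ} (hs : 0 < s) {m : ℕ} (hm : 0 < m) : 0 < gammaRatio s m := by
  have h := Real.Gamma_pos_of_pos (show 0 < (m : ℝ) + s by positivity)
  unfold gammaRatio
  positivity

/-- Euler's limit formula, restated as `Γ(m + s) ~ m ^ s · m! / m`. -/
lemma tendsto_gammaRatio {s : ℝ} (hs : 0 < s) : Tendsto (gammaRatio s) atTop (nhds 1) := by
  have hG := Real.Gamma_pos_of_pos hs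
  have h1 : Tendsto (fun m : ℕ => Real.Gamma s / Real.GammaSeq s m) atTop (nhds 1) := by
    have h := (tendsto_const_nhds (x := Real.Gamma s)).div
      (Real.GammaSeq_tendsto_Gamma s) hG.ne'
    rwa [div_self hG.ne'] at h
  have h2 : Tendsto (fun m : ℕ => (m : ℝ) / ((m : ℝ) + s)) atTop (nhds 1) :=
    tendsto_natCast_div_add_atTop s
  have h3 := h1.mul h2
  rw [one_mul] at h3
  refine h3.congr' ?_
  filter_upwards [eventually_gt_atTop 0] with m hm
  have hm' : (0 : ℝ) < m := by exact_mod_cast hm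
  have hp : 0 < (m : ℝ) ^ s := by positivity
  have hf : (0 : ℝ) < m.factorial := by positivity
  have hP : 0 < poch s m := Finset.prod_pos fun i _ => by positivity
  rw [gammaRatio, gamma_eq_poch hs, Real.GammaSeq, Finset.prod_range_succ]
  change Real.Gamma s / ((m : ℝ) ^ s * (m.factorial : ℝ) / (poch s m * (s + m))) * _ = _
  field_simp
  ring

theorem stmt11 (τ α ν : ℝ) (hτ : 0 < τ) (hα : 0 < α) (hν : 0 < ν)
    (d : ℕ) (hd : 2 ≤ d) :
    Tendsto (fun m : ℕ =>
        Cmd τ α ν d m /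
          ((Real.Gamma (ν + α) * Real.Gamma (ν + τ) /
              (Real.Gamma α * Real.Gamma ν * Real.Gamma τ)) *
            (Real.sqrt π / (Real.Gamma ((d : ℝ) / 2) * (2 : ℝ) ^ ((m : ℝ) + d - 2))) *
            ((m : ℝ) ^ (((d : ℝ) - 1) / 2) / (m : ℝ) ^ (1 + ν))))
      atTop (nhds 1) := by
  have hd' : (2 : ℝ) ≤ d := by exact_mod_cast hd
  have hd1 : (0 : ℝ) < (d : ℝ) - 1 := by linarith
  have hd2 : (0 : ℝ) < ((d : ℝ) - 1) / 2 := by linarith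
  have hs : 0 < α + ν + τ := by positivity
  have hlim := (((tendsto_gammaRatio hτ).mul (tendsto_gammaRatio hα)).mul
    (tendsto_gammaRatio hd1)).div
    ((tendsto_gammaRatio hs).mul (tendsto_gammaRatio hd2)) (by norm_num)
  norm_num only at hlim
  refine hlim.congr' ?_
  filter_upwards [eventually_gt_atTop 0] with m hm
  have hm' : (0 : ℝ) < m := by exact_mod_cast hm
  have hf : (0 : ℝ) < m.factorial := by positivity
  have e1 : (m : ℝ) ^ (α + ν + τ) = (m : ℝ) ^ α * (m : ℝ) ^ ν * (m : ℝ) ^ τ := by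
    rw [Real.rpow_add hm', Real.rpow_add hm']
  have e2 : (m : ℝ) ^ (1 + ν) = m * (m : ℝ) ^ ν := by
    rw [Real.rpow_add hm', Real.rpow_one]
  have e3 : (m : ℝ) ^ ((d : ℝ) - 1) =
      (m : ℝ) ^ (((d : ℝ) - 1) / 2) * (m : ℝ) ^ (((d : ℝ) - 1) / 2) := by
    rw [← Real.rpow_add hm', add_halves]
  have c1 : α + (ν + τ) = α + ν + τ := by ring
  have c2 : (m : ℝ) + d - 1 = m + ((d : ℝ) - 1) := by ring
  have r4 := gammaRatio_pos hs hm
  have r5 := gammaRatio_pos hd2 hm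
  have g1 := Real.Gamma_pos_of_pos hτ
  have g2 := Real.Gamma_pos_of_pos hα
  have g3 := Real.Gamma_pos_of_pos hν
  have g4 := Real.Gamma_pos_of_pos hs
  have g5 := Real.Gamma_pos_of_pos (add_pos hν hα)
  have g6 := Real.Gamma_pos_of_pos (add_pos hν hτ)
  have g7 := Real.Gamma_pos_of_pos (show 0 < (d : ℝ) / 2 by linarith)
  have p1 : 0 < (m : ℝ) ^ α := by positivity
  have p2 : 0 < (m : ℝ) ^ ν := by positivity
  have p3 : 0 < (m : ℝ) ^ τ := by positivity
  have p4 : 0 < (m : ℝ) ^ (((d : ℝ) - 1) / 2) := by positivity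
  have p5 : 0 < (2 : ℝ) ^ ((m : ℝ) + d - 2) := by positivity
  have p6 : 0 < Real.sqrt π := Real.sqrt_pos.mpr Real.pi_pos
  unfold Cmd schoenbergF betaFn
  simp only [Pi.div_apply]
  rw [c1]
  rw [c2, gamma_eq_gammaRatio _ hm, gamma_eq_gammaRatio _ hm, poch_eq_gammaRatio hτ hm,
    poch_eq_gammaRatio hα hm, poch_eq_gammaRatio hs hm, e1, e2, e3]
  rw [add_comm ν α] at g5 ⊢
  generalize (m : ℝ) ^ (((d : ℝ) - 1) / 2) = q4 at *
  generalize (m : ℝ) ^ α = q1 at *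
  generalize (m : ℝ) ^ ν = q2 at *
  generalize (m : ℝ) ^ τ = q3 at *
  generalize (2 : ℝ) ^ ((m : ℝ) + d - 2) = q5 at *
  generalize Real.sqrt π = q6 at *
  generalize Real.Gamma ((d : ℝ) / 2) = q7 at *
  field_simp
end
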